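/- Let I ⊂ R and J ⊂ T be nonzero proper monomial ideals, identified with their extensions to S = R ⊗_K T. Then Ass^∞(I+J) = { p + q : p ∈ Ass^*(I), q ∈ Ass^∞(J) } ∪ { p + q : p ∈ Ass^∞(I), q ∈ Ass^*(J) }, where p runs over prime ideals of R, q runs over prime ideals of T, and p + q denotes the sum of their extensions to S. -/

import Mathlib

open MvPolynomial

noncomputable section

/-- The set of associated primes `Ass(L)` of the quotient by an ideal `L`. -/
def assOf {A : Type} [CommRing A] (L : Ideal A) : Set (Ideal A) :=
  associatedPrimes A (A ⧸ L)

/-- `𝔄` is the stable value `Ass^∞(L)` of `Ass(L^k)` for all large `k`. -/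
def IsStableAssValue {A : Type} [CommRing A] (L : Ideal A) (𝔄 : Set (Ideal A)) : Prop :=
  ∃ N : ℕ, ∀ k : ℕ, N ≤ k → assOf (L ^ k) = 𝔄

/-- `Ass^*(L) = ⋃_{k ≥ 1} Ass(L^k)`. -/
def assStar {A : Type} [CommRing A] (L : Ideal A) : Set (Ideal A) :=
  {p | ∃ k : ℕ, 1 ≤ k ∧ p ∈ assOf (L ^ k)}

/-- The local v-number `v_p(L)`: the least degree of a homogeneous `f` with `(L : f) = p`. -/
def vnum {σ K : Type} [Field K] (L p : Ideal (MvPolynomial σ K)) : ℕ :=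
  sInf {d : ℕ | ∃ f : MvPolynomial σ K, f.IsHomogeneous d ∧ L.colon (Ideal.span {f}) = p}

/-- The v-number `v(L) = min_{p ∈ Ass(L)} v_p(L)`. -/
def vnumber {σ K : Type} [Field K] (L : Ideal (MvPolynomial σ K)) : ℕ :=
  sInf {d : ℕ | ∃ p ∈ assOf L, ∃ f : MvPolynomial σ K,
    f.IsHomogeneous d ∧ L.colon (Ideal.span {f}) = p}

/-- The initial degree `α(L)`: the least `d` such that `L` contains a nonzero
homogeneous element of degree `d`. -/
def alphaDeg {σ K : Type} [Field K] (L : Ideal (MvPolynomial σ K)) : ℕ :=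
  sInf {d : ℕ | ∃ f ∈ L, f ≠ 0 ∧ MvPolynomial.IsHomogeneous f d}

/-- A graded (homogeneous) ideal: one containing all homogeneous components
of each of its elements. -/
def IsGradedIdeal {σ K : Type} [Field K] (I : Ideal (MvPolynomial σ K)) : Prop :=
  ∀ f ∈ I, ∀ d : ℕ, homogeneousComponent d f ∈ I

/-- A monomial ideal: an ideal generated by monomials. -/
def IsMonomialIdeal {σ K : Type} [Field K] (I : Ideal (MvPolynomial σ K)) : Prop :=
  ∃ G : Set (σ →₀ ℕ), I = Ideal.span ((fun a => (monomial a (1 : K))) '' G)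

namespace MonomialAss

open scoped Pointwise

variable {σ τ K : Type} [Field K]

lemma mem_iff {L : Ideal (MvPolynomial σ K)} (hL : IsMonomialIdeal L) {f : MvPolynomial σ K} :
    f ∈ L ↔ ∀ a ∈ f.support, monomial a (1 : K) ∈ L := by
  classical
  obtain ⟨G, rfl⟩ := hL
  simp only [mem_ideal_span_monomial_image, support_monomial, one_ne_zero, if_false,
    Finset.mem_singleton, forall_eq]

lemma monomial_add_mem {L : Ideal (MvPolynomial σ K)} {a : σ →₀ ℕ} (b : σ →₀ ℕ)
    (h : monomial a (1 : K) ∈ L) : monomial (a + b) (1 : K) ∈ L := by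
  have := L.mul_mem_right (monomial b (1 : K)) h
  rwa [monomial_mul, one_mul] at this

lemma monomial_coeff_mem {L : Ideal (MvPolynomial σ K)} {a : σ →₀ ℕ} (c : K)
    (h : monomial a (1 : K) ∈ L) : monomial a c ∈ L := by
  have := L.mul_mem_left (C c) h
  rwa [C_mul_monomial, mul_one] at this

lemma monomial_mem_span_X {F : Set σ} {b : σ →₀ ℕ} :
    monomial b (1 : K) ∈ Ideal.span (X '' F : Set (MvPolynomial σ K)) ↔ ∃ i ∈ F, b i ≠ 0 := by
  classical
  simp only [mem_ideal_span_X_image, support_monomial, one_ne_zero, if_false,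
    Finset.mem_singleton, forall_eq]

lemma isMonomialIdeal_span_X (F : Set σ) :
    IsMonomialIdeal (Ideal.span (X '' F : Set (MvPolynomial σ K))) :=
  ⟨(fun i => Finsupp.single i 1) '' F, by rw [Set.image_image]; rfl⟩

lemma isPrime_span_X (F : Set σ) :
    (Ideal.span (X '' F : Set (MvPolynomial σ K))).IsPrime := by
  classical
  let φ : MvPolynomial σ K →ₐ[K] MvPolynomial σ K := aeval fun i => if i ∈ F then 0 else X i
  suffices h : Ideal.span (X '' F : Set (MvPolynomial σ K)) = RingHom.ker φ by
    rw [h]; exact RingHom.ker_isPrime φ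
  apply le_antisymm
  · rw [Ideal.span_le]
    rintro _ ⟨i, hi, rfl⟩
    simp [φ, hi]
  · intro g hg
    have key : (Ideal.Quotient.mkₐ K (Ideal.span (X '' F : Set (MvPolynomial σ K)))).comp φ =
        Ideal.Quotient.mkₐ K _ := by
      ext i
      by_cases hi : i ∈ F
      · simpa [φ, hi] using
          (Ideal.Quotient.eq_zero_iff_mem.2 (Ideal.subset_span (Set.mem_image_of_mem X hi))).symm
      · simp [φ, hi]
    have := DFunLike.congr_fun key g
    rw [AlgHom.comp_apply, (RingHom.mem_ker).1 hg, map_zero] at this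
    exact Ideal.Quotient.eq_zero_iff_mem.1 this.symm

lemma span_monomial_mul_span_monomial (G H : Set (σ →₀ ℕ)) :
    Ideal.span ((fun a => monomial a (1 : K)) '' G) *
      Ideal.span ((fun a => monomial a (1 : K)) '' H) =
        Ideal.span ((fun a => monomial a (1 : K)) '' (G + H)) := by
  rw [Ideal.span_mul_span', ← Set.image2_mul, Set.image2_image_left, Set.image2_image_right,
    ← Set.image2_add, Set.image_image2]
  simp [monomial_mul]

lemma IsMonomialIdeal.mul {L M : Ideal (MvPolynomial σ K)} (hL : IsMonomialIdeal L)
    (hM : IsMonomialIdeal M) : IsMonomialIdeal (L * M) := by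
  obtain ⟨G, rfl⟩ := hL
  obtain ⟨H, rfl⟩ := hM
  exact ⟨G + H, span_monomial_mul_span_monomial G H⟩

lemma IsMonomialIdeal.pow {L : Ideal (MvPolynomial σ K)} (hL : IsMonomialIdeal L) (k : ℕ) :
    IsMonomialIdeal (L ^ k) := by
  induction k with
  | zero =>
    refine ⟨{0}, ?_⟩
    rw [Set.image_singleton, pow_zero, ← C_apply, C_1, Ideal.span_singleton_one, Ideal.one_eq_top]
  | succ k ih => rw [pow_succ]; exact IsMonomialIdeal.mul ih hL

lemma IsMonomialIdeal.add {L M : Ideal (MvPolynomial σ K)} (hL : IsMonomialIdeal L)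
    (hM : IsMonomialIdeal M) : IsMonomialIdeal (L + M) := by
  obtain ⟨G, rfl⟩ := hL
  obtain ⟨H, rfl⟩ := hM
  refine ⟨G ∪ H, ?_⟩
  rw [Set.image_union, Ideal.span_union, Ideal.add_eq_sup]

lemma IsMonomialIdeal.map_rename {L : Ideal (MvPolynomial σ K)} (hL : IsMonomialIdeal L)
    (e : σ → τ) : IsMonomialIdeal (Ideal.map (rename (R := K) e) L) := by
  obtain ⟨G, rfl⟩ := hL
  refine ⟨Finsupp.mapDomain e '' G, ?_⟩
  rw [Ideal.map_span, Set.image_image, Set.image_image]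
  simp [rename_monomial]

/-- A monomial in a product of monomial ideals is a product of monomials of the factors. -/
lemma monomial_mem_mul {L M : Ideal (MvPolynomial σ K)} (hL : IsMonomialIdeal L)
    (hM : IsMonomialIdeal M) {a : σ →₀ ℕ} (h : monomial a (1 : K) ∈ L * M) :
    ∃ b c, a = b + c ∧ monomial b (1 : K) ∈ L ∧ monomial c (1 : K) ∈ M := by
  classical
  obtain ⟨G, rfl⟩ := hL
  obtain ⟨H, rfl⟩ := hM
  rw [span_monomial_mul_span_monomial, mem_ideal_span_monomial_image] at h
  obtain ⟨_, ⟨g, hg, g', hg', rfl⟩, hle⟩ := h a (by simp [support_monomial])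
  obtain ⟨d, rfl⟩ := exists_add_of_le hle
  refine ⟨g, g' + d, by rw [add_assoc], Ideal.subset_span ⟨g, hg, rfl⟩, ?_⟩
  exact monomial_add_mem d (Ideal.subset_span ⟨g', hg', rfl⟩)

lemma monomial_mem_add {L M : Ideal (MvPolynomial σ K)} (hL : IsMonomialIdeal L)
    (hM : IsMonomialIdeal M) {a : σ →₀ ℕ} (h : monomial a (1 : K) ∈ L + M) :
    monomial a (1 : K) ∈ L ∨ monomial a (1 : K) ∈ M := by
  classical
  obtain ⟨G, rfl⟩ := hL
  obtain ⟨H, rfl⟩ := hM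
  rw [Ideal.add_eq_sup, ← Ideal.span_union, ← Set.image_union, mem_ideal_span_monomial_image] at h
  obtain ⟨g, hg | hg, hle⟩ := h a (by simp [support_monomial])
  · obtain ⟨d, rfl⟩ := exists_add_of_le hle
    exact .inl (monomial_add_mem d (Ideal.subset_span ⟨g, hg, rfl⟩))
  · obtain ⟨d, rfl⟩ := exists_add_of_le hle
    exact .inr (monomial_add_mem d (Ideal.subset_span ⟨g, hg, rfl⟩))

/-- Dividing a monomial of `L ^ (k + 1)` by a variable leaves a monomial of `L ^ k`. -/
lemma monomial_mem_pow_of_add_single {L : Ideal (MvPolynomial σ K)} (hL : IsMonomialIdeal L)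
    (x : σ) (k : ℕ) : ∀ a : σ →₀ ℕ, monomial (a + Finsupp.single x 1) (1 : K) ∈ L ^ (k + 1) →
      monomial a (1 : K) ∈ L ^ k := by
  induction k with
  | zero => intro a _; simp
  | succ k ih =>
    intro a h
    rw [pow_succ] at h
    obtain ⟨b, c, hbc, hb, hc⟩ := monomial_mem_mul (IsMonomialIdeal.pow hL _) hL h
    by_cases hcx : Finsupp.single x 1 ≤ c
    · obtain ⟨d, rfl⟩ := exists_add_of_le hcx
      have : a = b + d := by
        apply add_right_cancel (b := Finsupp.single x 1)
        rw [hbc]; abel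
      rw [this]
      exact monomial_add_mem d hb
    · have hc0 : c x = 0 := by
        rw [Finsupp.single_le_iff] at hcx; omega
      have hbx : Finsupp.single x 1 ≤ b := by
        rw [Finsupp.single_le_iff]
        have := DFunLike.congr_fun hbc x
        simp at this
        omega
      obtain ⟨d, rfl⟩ := exists_add_of_le hbx
      have : a = d + c := by
        apply add_right_cancel (b := Finsupp.single x 1)
        rw [hbc]; abel
      have hd := ih d (by rwa [add_comm d])
      rw [this, pow_succ, ← one_mul (1 : K), ← monomial_mul]
      exact Ideal.mul_mem_mul hd hc

/-- An ideal `(L : f)` that is prime, with `L` monomial, is a monomial ideal. -/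
lemma monomial_mem_of_colon [Finite σ] {L P : Ideal (MvPolynomial σ K)} (hL : IsMonomialIdeal L)
    (hP : P.IsPrime) (n : ℕ) : ∀ f : MvPolynomial σ K, f.support.card = n →
      (∀ g, g ∈ P ↔ g * f ∈ L) → ∀ g ∈ P, ∀ a ∈ g.support, monomial a (1 : K) ∈ P := by
  classical
  obtain ⟨ℓ⟩ : Nonempty (LinearOrder σ) := ⟨linearOrderOfSTO WellOrderingRel⟩
  let ω : MonomialOrder σ := MonomialOrder.lex
  have card_lt : ∀ h : MvPolynomial σ K, h ≠ 0 →
      (h - ω.leadingTerm h).support ⊆ h.support.erase (ω.degree h) := by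
    intro h h0 a ha
    rw [mem_support_iff, coeff_sub, MonomialOrder.leadingTerm, coeff_monomial] at ha
    rw [Finset.mem_erase, mem_support_iff]
    by_cases e : ω.degree h = a
    · subst e; simp [MonomialOrder.leadingCoeff] at ha
    · rw [if_neg e, sub_zero] at ha
      exact ⟨fun h => e h.symm, ha⟩
  induction n using Nat.strong_induction_on with
  | _ n ih =>
  intro f hf hcol
  by_cases H : ∀ g ∈ P, g ≠ 0 → monomial (ω.degree g) (1 : K) ∈ P
  · intro g
    induction hk : g.support.card using Nat.strong_induction_on generalizing g with
    | _ k ihk =>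
    intro hg a ha
    have g0 : g ≠ 0 := by rintro rfl; simp at ha
    have hdeg := ω.degree_mem_support g0
    by_cases e : a = ω.degree g
    · rw [e]; exact H g hg g0
    · refine ihk _ ?_ (g - ω.leadingTerm g) rfl
        (P.sub_mem hg (monomial_coeff_mem _ (H g hg g0))) a ?_
      · rw [← hk]
        exact (Finset.card_le_card (card_lt g g0)).trans_lt (Finset.card_erase_lt_of_mem hdeg)
      · rw [mem_support_iff, coeff_sub, MonomialOrder.leadingTerm, coeff_monomial,
          if_neg (Ne.symm e), sub_zero]
        exact mem_support_iff.1 ha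
  · push Not at H
    obtain ⟨g, hg, g0, hgP⟩ := H
    have f0 : f ≠ 0 := by
      rintro rfl
      exact hP.ne_top ((Ideal.eq_top_iff_one _).2 ((hcol 1).2 (by simp)))
    have hlead : monomial (ω.degree g + ω.degree f) (1 : K) ∈ L := by
      refine (mem_iff hL).1 ((hcol g).1 hg) _ ?_
      rw [← ω.degree_mul g0 f0]
      exact ω.degree_mem_support (mul_ne_zero g0 f0)
    refine ih _ ?_ (monomial (ω.degree g) 1 * (f - ω.leadingTerm f)) rfl fun h => ?_
    · calc _ ≤ (support (monomial (ω.degree g) (1 : K)) + (f - ω.leadingTerm f).support).card :=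
            Finset.card_le_card (support_mul _ _)
        _ ≤ 1 * (f - ω.leadingTerm f).support.card := by
            refine Finset.card_add_le.trans ?_
            gcongr
            exact (Finset.card_le_card support_monomial_subset).trans (by simp)
        _ < n := by
            rw [one_mul, ← hf]
            exact (Finset.card_le_card (card_lt f f0)).trans_lt
              (Finset.card_erase_lt_of_mem (ω.degree_mem_support f0))
    · have h1 : h ∈ P ↔ h * monomial (ω.degree g) 1 ∈ P :=
        ⟨fun hh => P.mul_mem_right _ hh, fun hh => (hP.mem_or_mem hh).resolve_right hgP⟩
      have h2 : h * monomial (ω.degree g) 1 * ω.leadingTerm f ∈ L := by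
        rw [mul_assoc, MonomialOrder.leadingTerm, monomial_mul]
        exact L.mul_mem_left _ (monomial_coeff_mem _ hlead)
      rw [h1, hcol, ← mul_assoc, mul_sub, L.sub_mem_iff_left h2]

lemma mem_assOf_iff_colon [Finite σ] {L P : Ideal (MvPolynomial σ K)} :
    P ∈ assOf L ↔ P.IsPrime ∧ ∃ f, ∀ g, g ∈ P ↔ g * f ∈ L := by
  rw [assOf, AssociatedPrimes.mem_iff, IsAssociatedPrime, Submodule.isAssociatedPrime_iff]
  refine and_congr_right fun _ => ?_
  rw [(Ideal.Quotient.mk_surjective).exists]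
  refine exists_congr fun f => ?_
  rw [SetLike.ext_iff]
  refine forall_congr' fun g => ?_
  rw [Submodule.mem_colon_singleton, Submodule.mem_bot, ← Ideal.Quotient.eq_zero_iff_mem (I := L),
    map_mul]
  rfl

/-- The associated primes of a monomial ideal are the ideals generated by variables that are
colon ideals by a monomial. -/
lemma mem_assOf_iff [Finite σ] {L P : Ideal (MvPolynomial σ K)} (hL : IsMonomialIdeal L) :
    P ∈ assOf L ↔ ∃ (F : Set σ) (a : σ →₀ ℕ), P = Ideal.span (X '' F) ∧
      ∀ b, monomial (a + b) (1 : K) ∈ L ↔ ∃ i ∈ F, b i ≠ 0 := by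
  classical
  rw [mem_assOf_iff_colon]
  constructor
  · rintro ⟨hP, f, hf⟩
    have hmon := monomial_mem_of_colon hL hP _ f rfl hf
    have hPF : P = Ideal.span (X '' {i | X i ∈ P}) := by
      apply le_antisymm
      · intro g hg
        rw [mem_ideal_span_X_image]
        intro a ha
        have := hmon g hg a ha
        rw [monomial_eq, C_1, one_mul, Finsupp.prod, hP.prod_mem_iff] at this
        obtain ⟨i, hi, hi'⟩ := this
        exact ⟨i, hP.mem_of_pow_mem _ hi', Finsupp.mem_support_iff.1 hi⟩
      · rw [Ideal.span_le]
        rintro _ ⟨i, hi, rfl⟩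
        exact hi
    have hinf : f.support.inf (fun u => L.colon {monomial u (1 : K)}) ≤ P := by
      intro g hg
      rw [hf]
      simp only [Submodule.mem_finsetInf, Submodule.mem_colon_singleton, smul_eq_mul] at hg
      rw [f.as_sum, Finset.mul_sum]
      refine L.sum_mem fun u hu => ?_
      have := L.mul_mem_left (C (coeff u f)) (hg u hu)
      rwa [mul_left_comm, C_mul_monomial, mul_one] at this
    obtain ⟨u, hu, hle⟩ := (hP.inf_le' (s := f.support)).1 hinf
    refine ⟨_, u, hPF, fun b => ?_⟩
    rw [← monomial_mem_span_X (K := K), ← hPF]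
    constructor
    · intro h
      apply hle
      rwa [Submodule.mem_colon_singleton, smul_eq_mul, monomial_mul, one_mul, add_comm]
    · intro h
      refine (mem_iff hL).1 ((hf _).1 h) _ ?_
      rw [mem_support_iff, add_comm, coeff_monomial_mul, one_mul]
      exact mem_support_iff.1 hu
  · rintro ⟨F, a, rfl, h⟩
    refine ⟨isPrime_span_X F, monomial a 1, fun g => ?_⟩
    rw [mem_iff (isMonomialIdeal_span_X F), mem_iff hL]
    simp only [monomial_mem_span_X, ← h]
    constructor
    · intro H b hb
      have := support_mul _ _ hb
      rw [Finset.mem_add] at this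
      obtain ⟨c, hc, d, hd, rfl⟩ := this
      obtain rfl := Finset.mem_singleton.1 (support_monomial_subset hd)
      rw [add_comm]
      exact H c hc
    · intro H b hb
      refine H _ ?_
      rw [mem_support_iff, add_comm, coeff_mul_monomial, mul_one]
      exact mem_support_iff.1 hb

lemma monomial_sumElim (a : σ →₀ ℕ) (b : τ →₀ ℕ) :
    monomial (Finsupp.sumElim a b) (1 : K) =
      rename Sum.inl (monomial a (1 : K)) * rename Sum.inr (monomial b (1 : K)) := by
  rw [rename_monomial, rename_monomial, monomial_mul, one_mul]
  suffices h : Finsupp.sumElim a b = Finsupp.mapDomain Sum.inl a + Finsupp.mapDomain Sum.inr b by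
    rw [h]
  ext (i | i)
  · rw [Finsupp.add_apply, Finsupp.mapDomain_apply Sum.inl_injective,
      Finsupp.mapDomain_of_notMem_range _ _ (by simp)]
    simp
  · rw [Finsupp.add_apply, Finsupp.mapDomain_apply Sum.inr_injective,
      Finsupp.mapDomain_of_notMem_range _ _ (by simp)]
    simp

lemma exists_eq_sumElim (w : σ ⊕ τ →₀ ℕ) : ∃ a b, w = Finsupp.sumElim a b :=
  ⟨w.comapDomain Sum.inl Sum.inl_injective.injOn, w.comapDomain Sum.inr Sum.inr_injective.injOn, by
    ext (i | i) <;> simp⟩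

lemma sumElim_add (a c : σ →₀ ℕ) (b d : τ →₀ ℕ) :
    Finsupp.sumElim a b + Finsupp.sumElim c d = Finsupp.sumElim (a + c) (b + d) := by
  ext (i | i) <;> simp

lemma mem_of_mem_map_rename {I : Ideal (MvPolynomial σ K)} {e : σ → τ}
    {φ : MvPolynomial τ K →ₐ[K] MvPolynomial σ K} (hφ : φ.comp (rename e) = AlgHom.id K _)
    {f : MvPolynomial τ K} (hf : f ∈ Ideal.map (rename (R := K) e) I) : φ f ∈ I := by
  have hle : Ideal.map (rename (R := K) e) I ≤ I.comap φ := by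
    rw [Ideal.map_le_iff_le_comap]
    intro g hg
    have := DFunLike.congr_fun hφ g
    rw [AlgHom.comp_apply, AlgHom.id_apply] at this
    rwa [Ideal.mem_comap, Ideal.mem_comap, this]
  exact hle hf

lemma monomial_mem_of_map_inl {I : Ideal (MvPolynomial σ K)} {a : σ →₀ ℕ} {b : τ →₀ ℕ}
    (h : monomial (Finsupp.sumElim a b) (1 : K) ∈ Ideal.map (rename (R := K) Sum.inl) I) :
    monomial a (1 : K) ∈ I := by
  let φ : MvPolynomial (σ ⊕ τ) K →ₐ[K] MvPolynomial σ K := aeval (Sum.elim X fun _ => 1)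
  have hφ : φ.comp (rename Sum.inl) = AlgHom.id K _ := by ext i; simp [φ]
  have hb : φ (rename Sum.inr (monomial b (1 : K))) = 1 := by
    rw [aeval_rename, aeval_monomial]; simp
  have := mem_of_mem_map_rename hφ h
  rwa [monomial_sumElim, map_mul, hb, mul_one, ← AlgHom.comp_apply, hφ, AlgHom.id_apply] at this

lemma monomial_mem_of_map_inr {J : Ideal (MvPolynomial τ K)} {a : σ →₀ ℕ} {b : τ →₀ ℕ}
    (h : monomial (Finsupp.sumElim a b) (1 : K) ∈ Ideal.map (rename (R := K) Sum.inr) J) :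
    monomial b (1 : K) ∈ J := by
  let φ : MvPolynomial (σ ⊕ τ) K →ₐ[K] MvPolynomial τ K := aeval (Sum.elim (fun _ => 1) X)
  have hφ : φ.comp (rename Sum.inr) = AlgHom.id K _ := by ext i; simp [φ]
  have ha : φ (rename Sum.inl (monomial a (1 : K))) = 1 := by
    rw [aeval_rename, aeval_monomial]; simp
  have := mem_of_mem_map_rename hφ h
  rwa [monomial_sumElim, map_mul, ha, one_mul, ← AlgHom.comp_apply, hφ, AlgHom.id_apply] at this

/-- The sum of the extensions of `I` and `J` to the polynomial ring in both sets of variables. -/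
abbrev extSum (I : Ideal (MvPolynomial σ K)) (J : Ideal (MvPolynomial τ K)) :
    Ideal (MvPolynomial (σ ⊕ τ) K) :=
  Ideal.map (rename (R := K) Sum.inl) I + Ideal.map (rename (R := K) Sum.inr) J

lemma isMonomialIdeal_extSum {I : Ideal (MvPolynomial σ K)} {J : Ideal (MvPolynomial τ K)}
    (hI : IsMonomialIdeal I) (hJ : IsMonomialIdeal J) : IsMonomialIdeal (extSum I J) :=
  IsMonomialIdeal.add (IsMonomialIdeal.map_rename hI _) (IsMonomialIdeal.map_rename hJ _)

lemma extSum_span_X (F : Set σ) (G : Set τ) :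
    extSum (Ideal.span (X '' F : Set (MvPolynomial σ K))) (Ideal.span (X '' G)) =
      Ideal.span (X '' (Sum.inl '' F ∪ Sum.inr '' G)) := by
  rw [extSum, Ideal.map_span, Ideal.map_span, Ideal.add_eq_sup, ← Ideal.span_union,
    Set.image_union, Set.image_image, Set.image_image, Set.image_image, Set.image_image]
  simp

/-- Monomial form of the binomial expansion of `(I + J) ^ k`. -/
lemma monomial_mem_extSum_pow {I : Ideal (MvPolynomial σ K)} {J : Ideal (MvPolynomial τ K)}
    (hI : IsMonomialIdeal I) (hJ : IsMonomialIdeal J) (k : ℕ) : ∀ (a : σ →₀ ℕ) (b : τ →₀ ℕ),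
      monomial (Finsupp.sumElim a b) (1 : K) ∈ extSum I J ^ k ↔
        ∃ i j, i + j = k ∧ monomial a (1 : K) ∈ I ^ i ∧ monomial b (1 : K) ∈ J ^ j := by
  intro a b
  constructor
  · induction k generalizing a b with
    | zero => intro _; exact ⟨0, 0, rfl, by simp, by simp⟩
    | succ k ih =>
      intro h
      rw [pow_succ] at h
      have hM := isMonomialIdeal_extSum hI hJ
      obtain ⟨u, v, huv, hu, hv⟩ := monomial_mem_mul (IsMonomialIdeal.pow hM k) hM h
      obtain ⟨a₁, b₁, rfl⟩ := exists_eq_sumElim u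
      obtain ⟨a₂, b₂, rfl⟩ := exists_eq_sumElim v
      rw [sumElim_add] at huv
      have ha : a = a₁ + a₂ := by
        ext x; simpa using DFunLike.congr_fun huv (Sum.inl x)
      have hb : b = b₁ + b₂ := by
        ext x; simpa using DFunLike.congr_fun huv (Sum.inr x)
      subst ha hb
      obtain ⟨i, j, rfl, h₁, h₂⟩ := ih _ _ hu
      rcases monomial_mem_add (IsMonomialIdeal.map_rename hI _)
        (IsMonomialIdeal.map_rename hJ _) hv with hv | hv
      · refine ⟨i + 1, j, by omega, ?_, monomial_add_mem _ h₂⟩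
        rw [pow_succ, ← one_mul (1 : K), ← monomial_mul]
        exact Ideal.mul_mem_mul h₁ (monomial_mem_of_map_inl hv)
      · refine ⟨i, j + 1, by omega, monomial_add_mem _ h₁, ?_⟩
        rw [pow_succ, ← one_mul (1 : K), ← monomial_mul]
        exact Ideal.mul_mem_mul h₂ (monomial_mem_of_map_inr hv)
  · rintro ⟨i, j, rfl, h₁, h₂⟩
    rw [monomial_sumElim, pow_add]
    refine Ideal.mul_mem_mul ?_ ?_
    · refine Ideal.pow_right_mono le_sup_left i ?_
      rw [← Ideal.map_pow]
      exact Ideal.mem_map_of_mem _ h₁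
    · refine Ideal.pow_right_mono le_sup_right j ?_
      rw [← Ideal.map_pow]
      exact Ideal.mem_map_of_mem _ h₂

lemma exists_monomial_mem {L : Ideal (MvPolynomial σ K)} (hL : IsMonomialIdeal L) (h0 : L ≠ ⊥)
    (k : ℕ) : ∃ g, monomial g (1 : K) ∈ L ^ k := by
  obtain ⟨f, hf, f0⟩ := Submodule.exists_mem_ne_zero_of_ne_bot (pow_ne_zero k h0)
  obtain ⟨g, hg⟩ := support_nonempty.2 f0
  exact ⟨g, (mem_iff (IsMonomialIdeal.pow hL k)).1 hf g hg⟩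

/-- A monomial whose colon ideal in `L ^ (k + 1)` is an associated prime lies in `L ^ k`. -/
lemma monomial_mem_pow_of_colon {L : Ideal (MvPolynomial σ K)} (hL : IsMonomialIdeal L)
    (h0 : L ≠ ⊥) {k : ℕ} {F : Set σ} {a : σ →₀ ℕ}
    (h : ∀ b, monomial (a + b) (1 : K) ∈ L ^ (k + 1) ↔ ∃ i ∈ F, b i ≠ 0) :
    monomial a (1 : K) ∈ L ^ k := by
  obtain ⟨g, hg⟩ := exists_monomial_mem hL h0 (k + 1)
  obtain ⟨x, hx, -⟩ := (h g).1 (by rw [add_comm a g]; exact monomial_add_mem a hg)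
  exact monomial_mem_pow_of_add_single hL x k a ((h _).2 ⟨x, hx, by simp⟩)

lemma exists_order {L : Ideal (MvPolynomial σ K)} {a : σ →₀ ℕ} {k : ℕ}
    (h : monomial a (1 : K) ∉ L ^ k) :
    ∃ i, monomial a (1 : K) ∈ L ^ i ∧ monomial a (1 : K) ∉ L ^ (i + 1) := by
  by_contra! H
  have : ∀ i, monomial a (1 : K) ∈ L ^ i := fun i => by
    induction i with
    | zero => simp
    | succ i ih => exact H i ih
  exact h (this k)

lemma le_of_mem_pow {L : Ideal (MvPolynomial σ K)} {a : σ →₀ ℕ} {i j : ℕ}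
    (hi : monomial a (1 : K) ∉ L ^ (i + 1)) (hj : monomial a (1 : K) ∈ L ^ j) : j ≤ i := by
  by_contra! h
  exact hi (Ideal.pow_le_pow_right h hj)

/-- The associated primes of `(I + J) ^ k` are the sums of associated primes of `I ^ (i + 1)` and
`J ^ (j + 1)` with `i + j + 1 = k`. -/
lemma mem_assOf_extSum_pow [Finite σ] [Finite τ] {I : Ideal (MvPolynomial σ K)}
    {J : Ideal (MvPolynomial τ K)} (hI : IsMonomialIdeal I) (hJ : IsMonomialIdeal J)
    (hI0 : I ≠ ⊥) (hJ0 : J ≠ ⊥) {k : ℕ} {P : Ideal (MvPolynomial (σ ⊕ τ) K)} :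
    P ∈ assOf (extSum I J ^ k) ↔ ∃ i j, i + j + 1 = k ∧ ∃ p ∈ assOf (I ^ (i + 1)),
      ∃ q ∈ assOf (J ^ (j + 1)), P = extSum p q := by
  have mem := monomial_mem_extSum_pow hI hJ
  rw [mem_assOf_iff (IsMonomialIdeal.pow (isMonomialIdeal_extSum hI hJ) k)]
  constructor
  · rintro ⟨F, w, rfl, hw⟩
    obtain ⟨a, b, rfl⟩ := exists_eq_sumElim w
    replace hw : ∀ c d, (∃ i j, i + j = k ∧ monomial (a + c) (1 : K) ∈ I ^ i ∧
        monomial (b + d) (1 : K) ∈ J ^ j) ↔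
          (∃ x, Sum.inl x ∈ F ∧ c x ≠ 0) ∨ ∃ y, Sum.inr y ∈ F ∧ d y ≠ 0 := by
      intro c d
      rw [← mem, ← sumElim_add, hw]
      simp
    have not_mem : ¬ ∃ i j, i + j = k ∧ monomial a (1 : K) ∈ I ^ i ∧
        monomial b (1 : K) ∈ J ^ j := by
      simpa using hw 0 0
    have ha : monomial a (1 : K) ∉ I ^ k := fun h => not_mem ⟨k, 0, rfl, h, by simp⟩
    have hb : monomial b (1 : K) ∉ J ^ k := fun h => not_mem ⟨0, k, by simp, by simp, h⟩
    obtain ⟨i, hai, hai'⟩ := exists_order ha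
    obtain ⟨j, hbj, hbj'⟩ := exists_order hb
    have hlt : i + j < k := by
      by_contra! h
      obtain ⟨i', hi', j', hj', e⟩ : ∃ i' ≤ i, ∃ j' ≤ j, i' + j' = k :=
        ⟨min i k, by omega, k - min i k, by omega, by omega⟩
      exact not_mem ⟨i', j', e, Ideal.pow_le_pow_right hi' hai, Ideal.pow_le_pow_right hj' hbj⟩
    have hk : i + j + 1 = k := by
      obtain ⟨g, hg⟩ := exists_monomial_mem hI hI0 k
      have hF := (hw g 0).1 ⟨k, 0, rfl, by rw [add_comm a g]; exact monomial_add_mem a hg, by simp⟩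
      simp only [Finsupp.coe_zero, Pi.zero_apply, ne_eq, not_true_eq_false, and_false,
        exists_false, or_false] at hF
      obtain ⟨x, hx, -⟩ := hF
      obtain ⟨i', j', e, h₁, h₂⟩ := (hw (Finsupp.single x 1) 0).2 (.inl ⟨x, hx, by simp⟩)
      rw [add_zero] at h₂
      have hj' := le_of_mem_pow hbj' h₂
      have hi' : i' ≤ i + 1 := by
        cases i' with
        | zero => omega
        | succ i' =>
          have := le_of_mem_pow hai' (monomial_mem_pow_of_add_single hI x i' a h₁)
          omega
      omega
    refine ⟨i, j, hk, Ideal.span (X '' (Sum.inl ⁻¹' F)), ?_,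
      Ideal.span (X '' (Sum.inr ⁻¹' F)), ?_, ?_⟩
    · refine (mem_assOf_iff (IsMonomialIdeal.pow hI _)).2 ⟨_, a, rfl, fun c => ?_⟩
      have h := hw c 0
      simp only [add_zero, Finsupp.coe_zero, Pi.zero_apply, ne_eq, not_true_eq_false, and_false,
        exists_false, or_false] at h
      refine Iff.trans ⟨fun hc => ⟨i + 1, j, by omega, hc, hbj⟩, ?_⟩ h
      rintro ⟨i', j', e, h₁, h₂⟩
      have := le_of_mem_pow hbj' h₂
      exact Ideal.pow_le_pow_right (by omega) h₁
    · refine (mem_assOf_iff (IsMonomialIdeal.pow hJ _)).2 ⟨_, b, rfl, fun d => ?_⟩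
      have h := hw 0 d
      simp only [add_zero, Finsupp.coe_zero, Pi.zero_apply, ne_eq, not_true_eq_false, and_false,
        exists_false, false_or] at h
      refine Iff.trans ⟨fun hd => ⟨i, j + 1, by omega, hai, hd⟩, ?_⟩ h
      rintro ⟨i', j', e, h₁, h₂⟩
      have := le_of_mem_pow hai' h₁
      exact Ideal.pow_le_pow_right (by omega) h₂
    · rw [extSum_span_X, Set.image_preimage_inl_union_image_preimage_inr]
  · rintro ⟨i, j, rfl, p, hp, q, hq, rfl⟩
    obtain ⟨F, a, rfl, ha⟩ := (mem_assOf_iff (IsMonomialIdeal.pow hI _)).1 hp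
    obtain ⟨G, b, rfl, hb⟩ := (mem_assOf_iff (IsMonomialIdeal.pow hJ _)).1 hq
    refine ⟨_, Finsupp.sumElim a b, extSum_span_X F G, fun w => ?_⟩
    obtain ⟨c, d, rfl⟩ := exists_eq_sumElim w
    have hai := monomial_mem_pow_of_colon hI hI0 ha
    have hbj := monomial_mem_pow_of_colon hJ hJ0 hb
    have hF : (∃ x ∈ Sum.inl '' F ∪ Sum.inr '' G, (Finsupp.sumElim c d) x ≠ 0) ↔
        (∃ x ∈ F, c x ≠ 0) ∨ ∃ y ∈ G, d y ≠ 0 := by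
      simp
    rw [sumElim_add, mem, hF, ← ha, ← hb]
    constructor
    · rintro ⟨i', j', e, h₁, h₂⟩
      rcases Nat.lt_or_ge i i' with h | h
      · exact .inl (Ideal.pow_le_pow_right h h₁)
      · exact .inr (Ideal.pow_le_pow_right (by omega) h₂)
    · rintro (h | h)
      · exact ⟨i + 1, j, by omega, h, monomial_add_mem d hbj⟩
      · exact ⟨i, j + 1, by omega, monomial_add_mem c hai, h⟩

end MonomialAss

/-- Theorem 3.1 for monomial ideals: for nonzero proper monomial ideals
`I ⊂ R`, `J ⊂ T`, identified with their extensions to `S = R ⊗_K T`,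
`Ass^∞(I+J) = { p + q : p ∈ Ass^*(I), q ∈ Ass^∞(J) } ∪ { p + q : p ∈ Ass^∞(I), q ∈ Ass^*(J) }`,
where `p + q` denotes the sum of the extensions to `S`. -/
theorem stmt3 {K : Type} [Field K] {n m : ℕ}
    (I : Ideal (MvPolynomial (Fin n) K)) (J : Ideal (MvPolynomial (Fin m) K))
    (hInz : I ≠ ⊥) (hIpr : I ≠ ⊤) (hImon : IsMonomialIdeal I)
    (hJnz : J ≠ ⊥) (hJpr : J ≠ ⊤) (hJmon : IsMonomialIdeal J)
    (eI eJ : Ideal (MvPolynomial (Fin n ⊕ Fin m) K))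
    (heI : eI = Ideal.map (rename Sum.inl) I)
    (heJ : eJ = Ideal.map (rename Sum.inr) J)
    (AI : Set (Ideal (MvPolynomial (Fin n) K)))
    (AJ : Set (Ideal (MvPolynomial (Fin m) K)))
    (AL : Set (Ideal (MvPolynomial (Fin n ⊕ Fin m) K)))
    (hAI : IsStableAssValue I AI) (hAJ : IsStableAssValue J AJ)
    (hAL : IsStableAssValue (eI + eJ) AL) :
    AL = {P | ∃ p ∈ assStar I, ∃ q ∈ AJ,
            P = Ideal.map (rename Sum.inl) p + Ideal.map (rename Sum.inr) q} ∪
         {P | ∃ p ∈ AI, ∃ q ∈ assStar J,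
            P = Ideal.map (rename Sum.inl) p + Ideal.map (rename Sum.inr) q} := by
  subst heI heJ
  obtain ⟨NI, hNI⟩ := hAI
  obtain ⟨NJ, hNJ⟩ := hAJ
  obtain ⟨NL, hNL⟩ := hAL
  have key := @MonomialAss.mem_assOf_extSum_pow _ _ K _ _ _ I J hImon hJmon hInz hJnz
  ext P
  constructor
  · intro hP
    rw [← hNL (NL + NI + NJ) (by omega), key] at hP
    obtain ⟨i, j, hij, p, hp, q, hq, rfl⟩ := hP
    rcases le_or_gt NJ (j + 1) with h | h
    · exact .inl ⟨p, ⟨i + 1, by omega, hp⟩, q, hNJ _ h ▸ hq, rfl⟩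
    · exact .inr ⟨p, hNI (i + 1) (by omega) ▸ hp, q, ⟨j + 1, by omega, hq⟩, rfl⟩
  · rintro (⟨p, ⟨s, hs, hp⟩, q, hq, rfl⟩ | ⟨p, hp, q, ⟨s, hs, hq⟩, rfl⟩)
    · rw [← hNL (NL + NJ + s) (by omega), key]
      refine ⟨s - 1, NL + NJ, by omega, p, by rwa [Nat.sub_add_cancel hs], q, ?_, rfl⟩
      rwa [hNJ _ (by omega)]
    · rw [← hNL (NL + NI + s) (by omega), key]
      refine ⟨NL + NI, s - 1, by omega, p, ?_, q, by rwa [Nat.sub_add_cancel hs], rfl⟩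
      rwa [hNI _ (by omega)]
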